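/- Let $\alpha_1,\alpha_2>0$ and set $J(s)=e^{-\alpha_2 s}\int_0^s e^{\alpha_2 v}\big(\int_{-\infty}^0 e^{\alpha_1 u}(v-u)^{-1}\,du\big)dv$ for $s>0$. Then for every $N\in\mathbb{N}$, as $s\to+\infty$, $J(s)=\frac{1}{\alpha_1\alpha_2}\,s^{-1}+\frac{1}{\alpha_1+\alpha_2}\sum_{n=1}^{N}\Big(\frac{(-1)^n}{\alpha_2^{\,n+1}}+\frac{1}{\alpha_1^{\,n+1}}\Big)(-1)^n\,n!\;s^{-1-n}+O\big(s^{-N-2}\big)$. -/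

import Mathlib

open MeasureTheory Filter Asymptotics Topology Real

/-- Stieltjes-type moments. -/
noncomputable def auxG (a : ℝ) (k : ℕ) (v : ℝ) : ℝ :=
  ∫ t in Set.Ioi (0:ℝ), t ^ k * Real.exp (-a * t) * (v + t)⁻¹

noncomputable def auxM (a : ℝ) (k : ℕ) : ℝ := (k.factorial : ℝ) / a ^ (k + 1)

lemma auxInt (a : ℝ) (ha : 0 < a) (k : ℕ) :
    IntegrableOn (fun t : ℝ => t ^ k * Real.exp (-a * t)) (Set.Ioi 0) := by
  have h := integrableOn_rpow_mul_exp_neg_mul_rpow (p := 1) (s := k) (b := a)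
    (by have : (0:ℝ) ≤ k := Nat.cast_nonneg k
        linarith) one_pos ha
  simpa using h

lemma auxM_eq (a : ℝ) (ha : 0 < a) (k : ℕ) :
    ∫ t in Set.Ioi (0:ℝ), t ^ k * Real.exp (-a * t) = auxM a k := by
  have h := Real.integral_rpow_mul_exp_neg_mul_Ioi (a := (k:ℝ) + 1) (r := a) (by positivity) ha
  rw [Real.Gamma_nat_eq_factorial] at h
  have h2 : (1 / a) ^ ((k:ℝ) + 1) = (1 / a) ^ (k + 1) := by
    rw [← Real.rpow_natCast]; push_cast; rfl
  rw [h2] at h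
  simp only [add_sub_cancel_right, Real.rpow_natCast] at h
  simp only [neg_mul, auxM]
  rw [h, one_div, inv_pow]; field_simp

lemma auxMeas (a : ℝ) (k : ℕ) (v : ℝ) : AEStronglyMeasurable
    (fun t : ℝ => t ^ k * Real.exp (-a * t) * (v + t)⁻¹) (volume.restrict (Set.Ioi 0)) := by
  have : Measurable (fun t : ℝ => t ^ k * Real.exp (-a * t) * (v + t)⁻¹) := by fun_prop
  exact this.aestronglyMeasurable

lemma auxIntG (a : ℝ) (ha : 0 < a) (k : ℕ) (v : ℝ) (hv : 0 < v) :
    IntegrableOn (fun t : ℝ => t ^ k * Real.exp (-a * t) * (v + t)⁻¹) (Set.Ioi 0) := by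
  refine Integrable.mono' ((auxInt a ha k).mul_const v⁻¹) (auxMeas a k v) ?_
  filter_upwards [ae_restrict_mem measurableSet_Ioi] with t ht
  have ht : 0 < t := ht
  rw [Real.norm_of_nonneg (by positivity)]
  have : (v + t)⁻¹ ≤ v⁻¹ := by gcongr; linarith
  gcongr

lemma auxG_nonneg (a : ℝ) (k : ℕ) (v : ℝ) (hv : 0 < v) : 0 ≤ auxG a k v := by
  refine setIntegral_nonneg measurableSet_Ioi fun t ht => ?_
  have ht : 0 < t := ht
  positivity

lemma auxG_le (a : ℝ) (ha : 0 < a) (k : ℕ) (v : ℝ) (hv : 0 < v) :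
    auxG a k v ≤ auxM a k * v⁻¹ := by
  rw [← auxM_eq a ha k, ← integral_mul_const]
  refine setIntegral_mono_on (auxIntG a ha k v hv) ((auxInt a ha k).mul_const v⁻¹)
    measurableSet_Ioi fun t ht => ?_
  have ht : 0 < t := ht
  have : (v + t)⁻¹ ≤ v⁻¹ := by gcongr; linarith
  gcongr

lemma auxG_rec (a : ℝ) (ha : 0 < a) (k : ℕ) (v : ℝ) (hv : 0 < v) :
    auxG a k v = (auxM a k - auxG a (k+1) v) * v⁻¹ := by
  have h : v * auxG a k v + auxG a (k+1) v = auxM a k := by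
    rw [← auxM_eq a ha k, auxG, auxG, ← integral_const_mul,
      ← integral_add ((auxIntG a ha k v hv).const_mul v) (auxIntG a ha (k+1) v hv)]
    refine setIntegral_congr_fun measurableSet_Ioi fun t ht => ?_
    have ht : 0 < t := ht
    field_simp
    ring
  rw [← h]; field_simp; ring

lemma auxG_exp (a : ℝ) (ha : 0 < a) (N : ℕ) (v : ℝ) (hv : 0 < v) :
    auxG a 0 v = ∑ n ∈ Finset.range (N+1), (-1) ^ n * auxM a n * (v⁻¹) ^ (n+1)
      + (-1) ^ (N+1) * auxG a (N+1) v * (v⁻¹) ^ (N+1) := by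
  induction N with
  | zero => rw [auxG_rec a ha 0 v hv]; simp; ring
  | succ N ih =>
    rw [Finset.sum_range_succ, ih, auxG_rec a ha (N+1) v hv]; ring

lemma auxG_cont (a : ℝ) (ha : 0 < a) (v : ℝ) (hv : 0 < v) :
    ContinuousAt (auxG a 0) v := by
  unfold auxG
  refine continuousAt_of_dominated (bound := fun t => t ^ 0 * Real.exp (-a * t) * (v/2)⁻¹) ?_ ?_ ?_ ?_
  · exact Eventually.of_forall fun x => auxMeas a 0 x
  · filter_upwards [lt_mem_nhds (show v/2 < v by linarith)] with x hx
    filter_upwards [ae_restrict_mem measurableSet_Ioi] with t ht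
    have ht : 0 < t := ht
    have hx0 : 0 < x := by linarith
    rw [Real.norm_of_nonneg (by positivity)]
    have : (x + t)⁻¹ ≤ (v/2)⁻¹ := by gcongr; linarith
    gcongr
  · exact (auxInt a ha 0).mul_const _
  · filter_upwards [ae_restrict_mem measurableSet_Ioi] with t ht
    have ht : 0 < t := ht
    have : v + t ≠ 0 := by positivity
    fun_prop (disch := assumption)

lemma auxG_sqrt (a : ℝ) (ha : 0 < a) : ∃ C : ℝ, ∀ v, 0 < v → auxG a 0 v ≤ C * v ^ (-(1/2):ℝ) := by
  refine ⟨∫ t in Set.Ioi (0:ℝ), t ^ (-(1/2):ℝ) * Real.exp (-a * t), fun v hv => ?_⟩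
  have hi : IntegrableOn (fun t : ℝ => t ^ (-(1/2):ℝ) * Real.exp (-a * t)) (Set.Ioi 0) := by
    have h := integrableOn_rpow_mul_exp_neg_mul_rpow (p := 1) (s := -(1/2)) (b := a)
      (by norm_num) one_pos ha
    simpa using h
  rw [← integral_mul_const]
  refine setIntegral_mono_on (auxIntG a ha 0 v hv) (hi.mul_const _) measurableSet_Ioi fun t ht => ?_
  have ht : 0 < t := ht
  have h1 : (v + t)⁻¹ ≤ t ^ (-(1/2):ℝ) * v ^ (-(1/2):ℝ) := by
    rw [Real.rpow_neg ht.le, Real.rpow_neg hv.le, ← mul_inv, ← Real.sqrt_eq_rpow, ← Real.sqrt_eq_rpow]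
    have : 0 < √t := Real.sqrt_pos.2 ht
    have : 0 < √v := Real.sqrt_pos.2 hv
    gcongr
    nlinarith [sq_nonneg (√t - √v), Real.sq_sqrt ht.le, Real.sq_sqrt hv.le]
  calc t ^ 0 * Real.exp (-a * t) * (v + t)⁻¹
      ≤ t ^ 0 * Real.exp (-a * t) * (t ^ (-(1/2):ℝ) * v ^ (-(1/2):ℝ)) := by gcongr
    _ = _ := by simp; ring

lemma aux_ii (a b : ℝ) (ha : 0 < a) (s : ℝ) (hs : 0 < s) :
    IntervalIntegrable (fun v => Real.exp (b * v) * auxG a 0 v) volume 0 s := by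
  obtain ⟨C, hC⟩ := auxG_sqrt a ha
  have h1 : IntervalIntegrable (fun v : ℝ => v ^ (-(1/2):ℝ)) volume 0 s :=
    intervalIntegral.intervalIntegrable_rpow' (by norm_num)
  have h2 : IntervalIntegrable (auxG a 0) volume 0 s := by
    refine (h1.const_mul C).mono_fun' ?_ ?_
    · rw [Set.uIoc_of_le hs.le]
      refine ContinuousOn.aestronglyMeasurable ?_ measurableSet_Ioc
      intro v hv
      exact (auxG_cont a ha v hv.1).continuousWithinAt
    · rw [Set.uIoc_of_le hs.le]
      filter_upwards [ae_restrict_mem measurableSet_Ioc] with v hv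
      rw [Real.norm_of_nonneg (auxG_nonneg a 0 v hv.1)]
      exact hC v hv.1
  exact h2.continuousOn_mul (by fun_prop)

lemma aux_deriv (a b : ℝ) (ha : 0 < a) (s : ℝ) (hs : 0 < s) :
    HasDerivAt (fun s => ∫ v in (0:ℝ)..s, Real.exp (b * v) * auxG a 0 v)
      (Real.exp (b * s) * auxG a 0 s) s := by
  have hc : ContinuousOn (fun v => Real.exp (b * v) * auxG a 0 v) (Set.Ioi 0) := by
    intro v hv
    have := auxG_cont a ha v hv
    exact ContinuousAt.continuousWithinAt (by fun_prop)
  refine intervalIntegral.integral_hasDerivAt_right (aux_ii a b ha s hs) ?_ ?_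
  · exact hc.stronglyMeasurableAtFilter isOpen_Ioi s hs
  · exact hc.continuousAt (Ioi_mem_nhds hs)

noncomputable def auxc (a b : ℝ) (n : ℕ) : ℝ :=
  (n.factorial : ℝ) / (a + b) * (1 / b ^ (n+1) + (-1) ^ n / a ^ (n+1))

noncomputable def auxP (a b : ℝ) (N : ℕ) (s : ℝ) : ℝ :=
  ∑ n ∈ Finset.range (N+1), auxc a b n * (s⁻¹) ^ (n+1)

lemma aux_pow_deriv (n : ℕ) (s : ℝ) (hs : 0 < s) :
    HasDerivAt (fun s : ℝ => (s⁻¹) ^ n) (-(n * (s⁻¹) ^ (n+1))) s := by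
  have h := (hasDerivAt_inv hs.ne').pow n
  refine h.congr_deriv ?_
  cases n with
  | zero => simp
  | succ n => rw [Nat.add_sub_cancel, ← inv_pow]; ring

lemma auxP_deriv (a b : ℝ) (ha : 0 < a) (hb : 0 < b) (N : ℕ) (s : ℝ) (hs : 0 < s) :
    HasDerivAt (auxP a b N)
      (∑ n ∈ Finset.range (N+1), (-1) ^ n * auxM a n * (s⁻¹) ^ (n+1)
        - (N+1) * auxc a b N * (s⁻¹) ^ (N+2) - b * auxP a b N s) s := by
  induction N with
  | zero =>
    have h := (aux_pow_deriv 1 s hs).const_mul (auxc a b 0)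
    have e : auxP a b 0 = fun s => auxc a b 0 * (s⁻¹) ^ 1 := by ext; simp [auxP]
    rw [e]
    refine h.congr_deriv ?_
    simp [auxM, auxc]
    field_simp
    ring
  | succ N ih =>
    have h := ih.add ((aux_pow_deriv (N+1+1) s hs).const_mul (auxc a b (N+1)))
    have e : auxP a b (N+1) = fun s => auxP a b N s + auxc a b (N+1) * (s⁻¹) ^ (N+1+1) := by
      ext; simp [auxP, Finset.sum_range_succ]
    have key : b * auxc a b (N+1) = (N+1) * auxc a b N + (-1) ^ (N+1) * auxM a (N+1) := by
      simp only [auxc, auxM, Nat.factorial_succ]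
      push_cast
      have : a + b ≠ 0 := by positivity
      field_simp
      ring
    rw [e]
    refine h.congr_deriv ?_
    rw [Finset.sum_range_succ _ (N+1)]
    push_cast
    linear_combination (s⁻¹) ^ (N+2) * key

lemma aux_main (a b : ℝ) (ha : 0 < a) (hb : 0 < b) (N : ℕ) :
    ∃ K C v0 : ℝ, 0 < v0 ∧ ∀ s, v0 ≤ s →
      |Real.exp (-b * s) * (∫ v in (0:ℝ)..s, Real.exp (b * v) * auxG a 0 v) - auxP a b N s|
        ≤ K * Real.exp (-b * s) + C * (s⁻¹) ^ (N+2) := by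
  set F : ℝ → ℝ := fun s => (∫ v in (0:ℝ)..s, Real.exp (b * v) * auxG a 0 v)
    - Real.exp (b * s) * auxP a b N s with hF
  set D : ℝ → ℝ := fun s => (-1) ^ (N+1) * auxG a (N+1) s * (s⁻¹) ^ (N+1)
    + (N+1) * auxc a b N * (s⁻¹) ^ (N+2) with hD
  set C : ℝ := auxM a (N+1) + (N+1) * |auxc a b N| with hC
  have hC0 : 0 ≤ C := by
    have : 0 ≤ auxM a (N+1) := by unfold auxM; positivity
    positivity
  have hexp : ∀ s : ℝ, HasDerivAt (fun s => Real.exp (b * s)) (Real.exp (b * s) * b) s := by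
    intro s
    simpa using ((hasDerivAt_id s).const_mul b).exp
  have hFd : ∀ s, 0 < s → HasDerivAt F (Real.exp (b * s) * D s) s := by
    intro s hs
    have h := (aux_deriv a b ha s hs).sub ((hexp s).mul (auxP_deriv a b ha hb N s hs))
    refine h.congr_deriv ?_
    rw [auxG_exp a ha N s hs]
    simp only [hD]
    ring
  have hDb : ∀ s, 0 < s → |D s| ≤ C * (s⁻¹) ^ (N+2) := by
    intro s hs
    have h1 := auxG_le a ha (N+1) s hs
    have h0 := auxG_nonneg a (N+1) s hs
    have hN : (0:ℝ) ≤ N + 1 := by positivity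
    have hi : 0 < s⁻¹ := by positivity
    calc |D s| ≤ |(-1) ^ (N+1) * auxG a (N+1) s * (s⁻¹) ^ (N+1)|
          + |(N+1) * auxc a b N * (s⁻¹) ^ (N+2)| := abs_add_le _ _
      _ = auxG a (N+1) s * (s⁻¹) ^ (N+1) + (N+1) * |auxc a b N| * (s⁻¹) ^ (N+2) := by
        rw [abs_mul, abs_mul, abs_mul, abs_mul, abs_of_nonneg h0, abs_of_nonneg hN, abs_pow, abs_pow,
          abs_pow, abs_of_pos hi]
        simp
      _ ≤ (auxM a (N+1) * s⁻¹) * (s⁻¹) ^ (N+1) + (N+1) * |auxc a b N| * (s⁻¹) ^ (N+2) := by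
        gcongr
      _ = _ := by rw [hC]; ring
  set v0 : ℝ := 1 + 2 * (N+2) / b with hv0
  have hv0p : 0 < v0 := by positivity
  refine ⟨|F v0|, 2 * C / b, v0, hv0p, fun s hs => ?_⟩
  have hs0 : 0 < s := by linarith
  have hBd : ∀ x, 0 < x → HasDerivAt (fun x => |F v0| + 2 * C / b * (Real.exp (b * x) * (x⁻¹) ^ (N+2)))
      (2 * C / b * (Real.exp (b * x) * b * (x⁻¹) ^ (N+2)
        + Real.exp (b * x) * (-((N+2 : ℕ) * (x⁻¹) ^ (N+2+1))))) x := by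
    intro x hx
    exact (((hexp x).mul (aux_pow_deriv (N+2) x hx)).const_mul _).const_add _
  have key : ‖F s‖ ≤ |F v0| + 2 * C / b * (Real.exp (b * s) * (s⁻¹) ^ (N+2)) := by
    refine image_norm_le_of_norm_deriv_right_le_deriv_boundary' (a := v0) (b := s)
      (f := F) (f' := fun s => Real.exp (b * s) * D s) ?_ ?_
      (B := fun x => |F v0| + 2 * C / b * (Real.exp (b * x) * (x⁻¹) ^ (N+2)))
      (B' := fun x => (2 * C / b * (Real.exp (b * x) * b * (x⁻¹) ^ (N+2)
        + Real.exp (b * x) * (-((N+2 : ℕ) * (x⁻¹) ^ (N+2+1)))))) ?_ ?_ ?_ ?_ ⟨hs, le_rfl⟩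
    · intro x hx
      exact (hFd x (by linarith [hx.1])).continuousAt.continuousWithinAt
    · intro x hx
      exact (hFd x (by linarith [hx.1])).hasDerivWithinAt
    · rw [Real.norm_eq_abs]
      have : 0 ≤ 2 * C / b * (Real.exp (b * v0) * (v0⁻¹) ^ (N+2)) := by positivity
      linarith
    · intro x hx
      exact (hBd x (by linarith [hx.1])).continuousAt.continuousWithinAt
    · intro x hx
      exact (hBd x (by linarith [hx.1])).hasDerivWithinAt
    · intro x hx
      have hx0 : 0 < x := by linarith [hx.1]
      rw [norm_mul, Real.norm_eq_abs, Real.norm_eq_abs, Real.abs_exp]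
      have h1 := hDb x hx0
      have h2 : ((N:ℝ)+2) * x⁻¹ ≤ b / 2 := by
        rw [← div_eq_mul_inv, div_le_iff₀ hx0]
        have : 2 * ((N:ℝ)+2) / b ≤ x := by linarith [hx.1]
        rw [div_le_iff₀ hb] at this
        linarith
      calc Real.exp (b * x) * |D x| ≤ Real.exp (b * x) * (C * (x⁻¹) ^ (N+2)) := by gcongr
        _ = 2 * C / b * (Real.exp (b * x) * (x⁻¹) ^ (N+2)) * (b - b / 2) := by field_simp; ring
        _ ≤ 2 * C / b * (Real.exp (b * x) * (x⁻¹) ^ (N+2)) * (b - (N+2) * x⁻¹) := by gcongr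
        _ = _ := by push_cast; ring
  have e : Real.exp (-b * s) * Real.exp (b * s) = 1 := by
    rw [← Real.exp_add]; simp
  have e2 : Real.exp (-b * s) * (∫ v in (0:ℝ)..s, Real.exp (b * v) * auxG a 0 v) - auxP a b N s
      = Real.exp (-b * s) * F s := by
    simp only [hF]
    linear_combination auxP a b N s * e
  rw [e2, abs_mul, Real.abs_exp]
  calc Real.exp (-b * s) * |F s|
      ≤ Real.exp (-b * s) * (|F v0| + 2 * C / b * (Real.exp (b * s) * (s⁻¹) ^ (N+2))) := by
        gcongr; exact key
    _ = _ := by linear_combination (2 * C / b * (s⁻¹) ^ (N+2)) * e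

/-- Long-time asymptotic expansion of the (normalized) lagged cross-covariance in
the boundary case `H = H₁ + H₂ = 1`. -/
theorem stmt1
    (α1 α2 : ℝ) (hα1 : 0 < α1) (hα2 : 0 < α2)
    (J : ℝ → ℝ)
    (hJ : ∀ s, J s = Real.exp (-α2 * s) *
      ∫ v in (0:ℝ)..s, Real.exp (α2 * v) *
        ∫ u in Set.Iic (0:ℝ), Real.exp (α1 * u) * (v - u)⁻¹)
    (N : ℕ) :
    (fun s : ℝ => J s - (1 / (α1 * α2)) * s⁻¹ -
      (1 / (α1 + α2)) *
        ∑ n ∈ Finset.Icc 1 N,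
          ((-1 : ℝ) ^ n / α2 ^ (n + 1) + 1 / α1 ^ (n + 1)) *
            ((-1 : ℝ) ^ n * (n.factorial : ℝ)) * s ^ (-1 - (n : ℝ)))
      =O[atTop] fun s : ℝ => s ^ (-(N : ℝ) - 2) := by
  have hG : ∀ v : ℝ, ∫ u in Set.Iic (0:ℝ), Real.exp (α1 * u) * (v - u)⁻¹ = auxG α1 0 v := by
    intro v
    have h := integral_comp_neg_Iic (0:ℝ) (fun t => Real.exp (-α1 * t) * (v + t)⁻¹)
    simp only [neg_zero, neg_mul_neg, ← sub_eq_add_neg] at h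
    rw [h, auxG]
    simp
  simp only [hG] at hJ
  obtain ⟨K, C, v0, hv0, hb⟩ := aux_main α1 α2 hα1 hα2 N
  have hpow : ∀ (n : ℕ) (s : ℝ), 0 < s → s ^ (-1 - (n:ℝ)) = (s⁻¹) ^ (n+1) := by
    intro n s hs
    rw [inv_pow, ← Real.rpow_natCast, ← Real.rpow_neg hs.le]
    congr 1; push_cast; ring
  have hP : ∀ s : ℝ, 0 < s → (1 / (α1 * α2)) * s⁻¹ +
      (1 / (α1 + α2)) *
        ∑ n ∈ Finset.Icc 1 N,
          ((-1 : ℝ) ^ n / α2 ^ (n + 1) + 1 / α1 ^ (n + 1)) *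
            ((-1 : ℝ) ^ n * (n.factorial : ℝ)) * s ^ (-1 - (n : ℝ)) = auxP α1 α2 N s := by
    intro s hs
    have hr : Finset.range (N+1) = insert 0 (Finset.Icc 1 N) := by
      ext x; simp; omega
    rw [auxP, hr, Finset.sum_insert (by simp), Finset.mul_sum]
    congr 1
    · simp only [auxc, Nat.factorial_zero, Nat.cast_one, zero_add, pow_one, pow_zero]; field_simp
    · refine Finset.sum_congr rfl fun n _ => ?_
      rw [hpow n s hs, auxc]
      have hsq : ((-1:ℝ) ^ n) * (-1) ^ n = 1 := by rw [← mul_pow]; simp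
      linear_combination (1 / (α1 + α2) * (1 / α2 ^ (n+1)) * n.factorial * (s⁻¹) ^ (n+1)) * hsq
  have hO1 : (fun s : ℝ => K * Real.exp (-α2 * s) + C * (s⁻¹) ^ (N+2)) =O[atTop]
      fun s : ℝ => s ^ (-(N : ℝ) - 2) := by
    refine IsBigO.add ?_ ?_
    · exact (isLittleO_exp_neg_mul_rpow_atTop hα2 _).isBigO.const_mul_left K
    · refine IsBigO.const_mul_left ?_ C
      refine EventuallyEq.isBigO ?_
      filter_upwards [eventually_gt_atTop 0] with s hs
      rw [← hpow (N+1) s hs]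
      congr 1; push_cast; ring
  refine IsBigO.trans (IsBigO.of_bound 1 ?_) hO1
  filter_upwards [eventually_ge_atTop v0] with s hs
  rw [sub_sub, hP s (by linarith), hJ, one_mul, Real.norm_eq_abs]
  exact (hb s hs).trans (le_abs_self _)
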